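/- Let A : ℝ → ℝ^{n×n} and B : ℝ → ℝ^{n×m} be differentiable at 0 with A(0) Hurwitz, let C ∈ ℝ^{q×n}, and for ε near 0 let P(ε) be the unique solution of A(ε)·P + P·A(ε)ᵀ + B(ε)·B(ε)ᵀ = 0. Then the cost Z(ε) := trace(Cᵀ·C·P(ε)) is differentiable at 0 and Z'(0) = trace(Q·(A'(0)·P(0) + P(0)·A'(0)ᵀ + B'(0)·B(0)ᵀ + B(0)·B'(0)ᵀ)), where Q is the unique solution of A(0)ᵀ·Q + Q·A(0) + Cᵀ·C = 0. -/

import Mathlib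

open Matrix

attribute [local instance] Matrix.linftyOpNormedAddCommGroup Matrix.linftyOpNormedRing
  Matrix.linftyOpNormedAlgebra Matrix.linftyOpNormedSpace

/-- A real square matrix is Hurwitz if every eigenvalue of it, regarded as a complex
matrix, has negative real part. -/
def Matrix.IsHurwitz {k : Type*} [Fintype k] [DecidableEq k] (A : Matrix k k ℝ) : Prop :=
  ∀ z ∈ spectrum ℂ (A.map (algebraMap ℝ ℂ)), z.re < 0

theorem lyap_mat_mul {n m k : ℕ} {A : ℝ → Matrix (Fin n) (Fin m) ℝ} {B : ℝ → Matrix (Fin m) (Fin k) ℝ}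
    {A' B'} {x : ℝ} (hA : HasDerivAt A A' x) (hB : HasDerivAt B B' x) :
    HasDerivAt (fun e => A e * B e) (A x * B' + A' * B x) x := by
  let L : Matrix (Fin n) (Fin m) ℝ →ₗ[ℝ] Matrix (Fin m) (Fin k) ℝ →ₗ[ℝ] Matrix (Fin n) (Fin k) ℝ :=
    LinearMap.mk₂ ℝ (fun X Y => X * Y) (fun _ _ _ => Matrix.add_mul _ _ _) (fun _ _ _ => Matrix.smul_mul _ _ _)
      (fun _ _ _ => Matrix.mul_add _ _ _) (fun _ _ _ => Matrix.mul_smul _ _ _)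
  exact L.toContinuousBilinearMap.hasDerivAt_of_bilinear (fun _ => hA) (fun _ => hB)

theorem lyap_transpose {n m : ℕ} {A : ℝ → Matrix (Fin n) (Fin m) ℝ} 
    {A'} {x : ℝ} (hA : HasDerivAt A A' x) :
    HasDerivAt (fun e => (A e)ᵀ) (A'ᵀ) x := by
  let L := (Matrix.transposeLinearEquiv (Fin n) (Fin m) ℝ ℝ).toLinearMap.toContinuousLinearMap
  exact L.hasFDerivAt.comp_hasDerivAt x hA

theorem lyap_trace {n : ℕ} {A : ℝ → Matrix (Fin n) (Fin n) ℝ} 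
    {A'} {x : ℝ} (hA : HasDerivAt A A' x) :
    HasDerivAt (fun e => (A e).trace) (A'.trace) x := by
  let L := (Matrix.traceLinearMap (Fin n) ℝ ℝ).toContinuousLinearMap
  exact L.hasFDerivAt.comp_hasDerivAt x hA

theorem lyap_spec {n : ℕ} (A : Matrix (Fin n) (Fin n) ℂ) (z : ℂ) :
    z ∈ spectrum ℂ A ↔ A.charpoly.IsRoot z := by
  exact Matrix.mem_spectrum_iff_isRoot_charpoly

theorem lyap_inj_complex {n : ℕ} (A : Matrix (Fin n) (Fin n) ℂ)
    (h : ∀ z ∈ spectrum ℂ A, z.re < 0) (X : Matrix (Fin n) (Fin n) ℂ)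
    (hX : A * X + X * Aᵀ = 0) : X = 0 := by
  rcases Nat.eq_zero_or_pos n with rfl | hn
  · exact Subsingleton.elim _ _
  have : Nonempty (Fin n) := ⟨⟨0, hn⟩⟩
  have hs : A * X = X * (-Aᵀ) := by rw [Matrix.mul_neg]; exact eq_neg_of_add_eq_zero_left hX
  have hp : ∀ p : Polynomial ℂ, Polynomial.aeval A p * X = X * Polynomial.aeval (-Aᵀ) p := by
    intro p
    induction p using Polynomial.induction_on' with
    | add p q hp hq => simp [add_mul, mul_add, hp, hq]
    | monomial k a =>
      have hk : A ^ k * X = X * (-Aᵀ) ^ k := (SemiconjBy.pow_right (a := X) (x := -Aᵀ) (y := A) hs.symm k).symm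
      simp only [Polynomial.aeval_monomial, Algebra.algebraMap_eq_smul_one, smul_mul_assoc, one_mul, mul_smul_comm, hk]
  have hc := hp A.charpoly
  rw [Matrix.aeval_self_charpoly, zero_mul] at hc
  have hu : IsUnit (Polynomial.aeval (-Aᵀ) A.charpoly) := by
    rw [← spectrum.zero_notMem_iff ℂ,
      spectrum.map_polynomial_aeval_of_degree_pos _ _ (by rw [Matrix.charpoly_degree_eq_dim]; simpa using hn)]
    rintro ⟨z, hz, hz0⟩
    have h1 := h z ((lyap_spec A z).2 hz0)
    have hz2 : -z ∈ spectrum ℂ Aᵀ := by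
      rw [← spectrum.neg_eq] at hz
      simpa using hz
    rw [lyap_spec, Matrix.charpoly_transpose, ← lyap_spec] at hz2
    have h2 := h _ hz2
    simp at h2
    linarith
  exact (hu.mul_left_eq_zero).1 hc.symm

theorem lyap_inj {n : ℕ} (A : Matrix (Fin n) (Fin n) ℝ)
    (h : A.IsHurwitz) (X : Matrix (Fin n) (Fin n) ℝ)
    (hX : A * X + X * Aᵀ = 0) : X = 0 := by
  have := lyap_inj_complex (A.map (algebraMap ℝ ℂ)) h (X.map (algebraMap ℝ ℂ)) (by
    rw [← Matrix.transpose_map, ← Matrix.map_mul, ← Matrix.map_mul, ← Matrix.map_add _ (map_add _), hX]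
    simp)
  ext i j
  have := congrFun (congrFun this i) j
  simpa using this

theorem lyap_diff_gen {M : Type*} [NormedRing M] [NormedAlgebra ℝ M] [FiniteDimensional ℝ M]
    (A A₂ S P : ℝ → M)
    (hA : DifferentiableAt ℝ A 0) (hA₂ : DifferentiableAt ℝ A₂ 0) (hS : DifferentiableAt ℝ S 0)
    (hinj : ∀ X : M, A 0 * X + X * A₂ 0 = 0 → X = 0)
    (hP : ∀ᶠ ε in nhds (0 : ℝ), A ε * P ε + P ε * A₂ ε + S ε = 0) :
    DifferentiableAt ℝ P 0 := by
  have : CompleteSpace M := FiniteDimensional.complete ℝ M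
  let F : ℝ → (M →L[ℝ] M) := fun e =>
    ContinuousLinearMap.mul ℝ M (A e) + (ContinuousLinearMap.mul ℝ M).flip (A₂ e)
  have hF : DifferentiableAt ℝ F 0 :=
    ((ContinuousLinearMap.mul ℝ M).differentiableAt.comp 0 hA).add
      ((ContinuousLinearMap.mul ℝ M).flip.differentiableAt.comp 0 hA₂)
  have hinj : Function.Injective (F 0).toLinearMap := by
    rw [← LinearMap.ker_eq_bot, LinearMap.ker_eq_bot']
    intro X hX
    exact hinj X hX
  have hu : IsUnit (F 0) := by
    refine ⟨((LinearEquiv.ofInjectiveEndo _ hinj).toContinuousLinearEquiv).toUnit, ?_⟩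
    ext1 X
    rfl
  have hev : ∀ᶠ e in nhds (0 : ℝ), IsUnit (F e) :=
    hF.continuousAt.eventually ((Units.isOpen (R := M →L[ℝ] M)).mem_nhds (x := F 0) hu)
  have hI : DifferentiableAt ℝ (fun e => Ring.inverse (F e)) 0 :=
    (differentiableAt_inverse (𝕜 := ℝ) hu).comp 0 hF
  have hR := hI.clm_apply hS.neg
  refine hR.congr_of_eventuallyEq ?_
  filter_upwards [hP, hev] with e he hue
  have h1 : F e (P e) = - S e := eq_neg_of_add_eq_zero_left he
  have h2 : Ring.inverse (F e) (F e (P e)) = P e :=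
    congrArg (fun T : M →L[ℝ] M => T (P e)) (Ring.inverse_mul_cancel _ hue)
  rw [h1] at h2
  exact h2.symm

theorem lyap_diff {n : ℕ} (A S P : ℝ → Matrix (Fin n) (Fin n) ℝ)
    (hA : DifferentiableAt ℝ A 0) (hS : DifferentiableAt ℝ S 0) (hA0 : (A 0).IsHurwitz)
    (hP : ∀ᶠ ε in nhds (0 : ℝ), A ε * P ε + P ε * (A ε)ᵀ + S ε = 0) :
    DifferentiableAt ℝ P 0 :=
  lyap_diff_gen A (fun e => (A e)ᵀ) S P hA (lyap_transpose hA.hasDerivAt).differentiableAt hS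
    (lyap_inj (A 0) hA0) hP

theorem lyap_alg {n m q : ℕ} (A A' P P' Q : Matrix (Fin n) (Fin n) ℝ)
    (B B' : Matrix (Fin n) (Fin m) ℝ) (C : Matrix (Fin q) (Fin n) ℝ)
    (hQ : Aᵀ * Q + Q * A + Cᵀ * C = 0)
    (hE0 : A * P' + A' * P + (P * A'ᵀ + P' * Aᵀ) + (B * B'ᵀ + B' * Bᵀ) = 0) :
    (Cᵀ * C * P' + 0 * P).trace =
      (Q * (A' * P + P * A'ᵀ + B' * Bᵀ + B * B'ᵀ)).trace := by
  have hC : Cᵀ * C = -(Aᵀ * Q + Q * A) := eq_neg_of_add_eq_zero_right hQ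
  have hK : A' * P + P * A'ᵀ + B' * Bᵀ + B * B'ᵀ = -(A * P' + P' * Aᵀ) := by
    rw [eq_neg_iff_add_eq_zero, ← hE0]; abel
  rw [hK, hC]
  simp only [Matrix.zero_mul, add_zero, Matrix.neg_mul, Matrix.mul_neg, Matrix.trace_neg,
    Matrix.add_mul, Matrix.mul_add, Matrix.trace_add]
  rw [Matrix.mul_assoc, Matrix.trace_mul_comm Aᵀ, Matrix.mul_assoc, Matrix.mul_assoc, add_comm]

/-- Sensitivity of the LQG-type cost: if `A, B` are differentiable at `0`, `A 0` is
Hurwitz, `P ε` solves the Lyapunov equation `A ε · P + P · (A ε)ᵀ + B ε · (B ε)ᵀ = 0` for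
`ε` near `0`, and `Q` solves the dual equation `(A 0)ᵀ Q + Q (A 0) + Cᵀ C = 0`, then
`Z(ε) := trace(Cᵀ C P ε)` is differentiable at `0` with
`Z'(0) = trace(Q (A'(0) P(0) + P(0) A'(0)ᵀ + B'(0) B(0)ᵀ + B(0) B'(0)ᵀ))`. -/
theorem cost_differentiable_and_deriv {n m q : ℕ}
    (A : ℝ → Matrix (Fin n) (Fin n) ℝ) (B : ℝ → Matrix (Fin n) (Fin m) ℝ)
    (C : Matrix (Fin q) (Fin n) ℝ)
    (hA : DifferentiableAt ℝ A 0) (hB : DifferentiableAt ℝ B 0)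
    (hA0 : (A 0).IsHurwitz)
    (P : ℝ → Matrix (Fin n) (Fin n) ℝ)
    (hP : ∀ᶠ ε in nhds (0 : ℝ), A ε * P ε + P ε * (A ε)ᵀ + B ε * (B ε)ᵀ = 0)
    (Q : Matrix (Fin n) (Fin n) ℝ)
    (hQ : (A 0)ᵀ * Q + Q * A 0 + Cᵀ * C = 0) :
    DifferentiableAt ℝ (fun ε => (Cᵀ * C * P ε).trace) 0 ∧
      deriv (fun ε => (Cᵀ * C * P ε).trace) 0 =
        (Q * (deriv A 0 * P 0 + P 0 * (deriv A 0)ᵀ +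
              deriv B 0 * (B 0)ᵀ + B 0 * (deriv B 0)ᵀ)).trace := by
  have hBB := lyap_mat_mul hB.hasDerivAt (lyap_transpose hB.hasDerivAt)
  have hPd := (lyap_diff A _ P hA hBB.differentiableAt hA0 hP).hasDerivAt
  have hZ := lyap_trace (lyap_mat_mul (hasDerivAt_const (0 : ℝ) (Cᵀ * C)) hPd)
  have hE := ((lyap_mat_mul hA.hasDerivAt hPd).add
    (lyap_mat_mul hPd (lyap_transpose hA.hasDerivAt))).add hBB
  have hE0 := (hE.congr_of_eventuallyEq (f₁ := fun _ => 0)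
    (by filter_upwards [hP] with e he; exact he.symm)).unique (hasDerivAt_const (0 : ℝ) 0)
  refine ⟨hZ.differentiableAt, hZ.deriv.trans ?_⟩
  exact lyap_alg _ _ _ _ _ _ _ _ hQ hE0
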